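/- Assume m ≥ 2. Let Û₁ : H → H × H be Û₁ b = (λ₁ b, η₁ b), set â_{1,n} = sup_{p ∈ ℕ} β̃_{1,n,p}² + η_{1,n}² for n ∈ {1, …, m−1} and â_{1,m} = sup_{p ∈ ℕ} β̃_{1,m,p}², define ā_{i,m} = sup_{p ∈ ℕ} ( β_{i,m,p}² + β̃_{i,m,p}² ), and define recursively θ̂_n = √(â_{1,n}) + Σ_{i=2}^n θ̂_{i−1} √(a_{i,n}) for n = 1, …, m−1 and θ̂_m = √(â_{1,m}) + Σ_{i=2}^m θ̂_{i−1} √(ā_{i,m}). Let α ∈ [1/2, 1] and define b̂_α = sup_{p ∈ ℕ} ( β̃_{1,m,p} − 2^m (1 − α) )². Let Ū_m(x, b) = W_m x + λ_m b and N̂ = R_m ∘ Ū_m ∘ Q_{m−1} ∘ U_{m−1} ∘ ⋯ ∘ Q_1 ∘ Û₁ : H → H. If √(b̂_α) − √(â_{1,m}) ≤ 2^m α − 2 θ̂_m, then N̂ is α-averaged. -/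

import Mathlib

/-!
Each firmly nonexpansive `R n` is `(Id + S) / 2` with `S` nonexpansive, and so is `Qop R n` on the
product space. Write `d n` for the difference of the `n`-th pre-activations produced by two inputs
`b`, `b'`, and `t n` for its image under the reflected activation, so that `‖t n‖ ≤ ‖d n‖`.
Unrolling the layers gives
`2 ^ (n - 1) d n = (U n ∘ ⋯ ∘ U 1) (0, b - b') + ∑ i ∈ [2, n], 2 ^ (i - 2) (U n ∘ ⋯ ∘ U i) (t (i - 1))`
(`unroll`). The compositions `U n ∘ ⋯ ∘ U i` act on each coordinate `p` as the triangular matrix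
with rows `(β, β̃)` and `(0, η)` (`inner_fst_opComp`, `snd_opComp`), so the Parseval identity turns
the largest eigenvalue of the `2 × 2` Gram matrices into the operator bounds `√a`, `√ā`, `√â`; hence
`2 ^ (n - 1) ‖d n‖ ≤ θ̂ n ‖b - b'‖`. Subtracting `2 ^ m (1 - α) (b - b')` from `2 ^ m` times the
output difference only alters the purely linear term, whose norm bound `√â` becomes `√b̂`. The total
Lipschitz constant is therefore at most `√b̂ + (θ̂ m - √â) + θ̂ m ≤ 2 ^ m α`.
-/

noncomputable section

open Finset

variable {H : Type*} [NormedAddCommGroup H] [InnerProductSpace ℝ H]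

/-- Build the pair `(x, b)` in the `ℓ²` product space `H × H`. -/
def mkP (x b : H) : WithLp 2 (H × H) := (WithLp.equiv 2 (H × H)).symm (x, b)

/-- First component of an element of the product space. -/
def fstP (z : WithLp 2 (H × H)) : H := (WithLp.equiv 2 (H × H) z).1

/-- Second component of an element of the product space. -/
def sndP (z : WithLp 2 (H × H)) : H := (WithLp.equiv 2 (H × H) z).2

/-- `(x, b) ↦ x` as a continuous linear map on the `ℓ²` product. -/
def fstL : WithLp 2 (H × H) →L[ℝ] H :=
  (ContinuousLinearMap.fst ℝ H H).comp
    (WithLp.prodContinuousLinearEquiv 2 ℝ H H).toContinuousLinearMap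

/-- `(x, b) ↦ b` as a continuous linear map on the `ℓ²` product. -/
def sndL : WithLp 2 (H × H) →L[ℝ] H :=
  (ContinuousLinearMap.snd ℝ H H).comp
    (WithLp.prodContinuousLinearEquiv 2 ℝ H H).toContinuousLinearMap

/-- `Uₙ(x, b) = (Wₙ x + λₙ b, ηₙ b)` as a continuous linear map on the product space. -/
def Uop (W : ℕ → H →L[ℝ] H) (lam eta : ℕ → ℝ) (n : ℕ) :
    WithLp 2 (H × H) →L[ℝ] WithLp 2 (H × H) :=
  ((WithLp.prodContinuousLinearEquiv 2 ℝ H H).symm.toContinuousLinearMap).comp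
    (((((W n).comp (ContinuousLinearMap.fst ℝ H H)) + lam n • (ContinuousLinearMap.snd ℝ H H)).prod
        (eta n • (ContinuousLinearMap.snd ℝ H H))).comp
      (WithLp.prodContinuousLinearEquiv 2 ℝ H H).toContinuousLinearMap)

/-- Composition `Aₙ ∘ ⋯ ∘ Aᵢ` (the identity when `n < i`, i.e. when the composition is empty). -/
def opComp {E : Type*} [NormedAddCommGroup E] [NormedSpace ℝ E]
    (A : ℕ → E →L[ℝ] E) (i : ℕ) : ℕ → (E →L[ℝ] E)
  | 0 => 1
  | n + 1 => if n + 1 < i then 1 else (A (n + 1)).comp (opComp A i n)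

/-- `η_{i,j} = η_j ⋯ η_i` if `j ≥ i`, and `1` otherwise. -/
def etaP (eta : ℕ → ℝ) (i j : ℕ) : ℝ := ∏ k ∈ Finset.Icc i j, eta k

/-- `β_{i,n,p} = ∏_{j=i}^n β_p^{(j)}`. -/
def betaC (beta : ℕ → ℕ → ℝ) (i n p : ℕ) : ℝ := ∏ j ∈ Finset.Icc i n, beta j p

/-- `β̃_{i,n,p} = Σ_{j=i}^{n−1} (∏_{l=j+1}^n β_p^{(l)}) λ_j η_{i,j−1} + λ_n η_{i,n−1}`. -/
def betaT (beta : ℕ → ℕ → ℝ) (lam eta : ℕ → ℝ) (i n p : ℕ) : ℝ :=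
  (∑ j ∈ Finset.Icc i (n - 1), (∏ l ∈ Finset.Icc (j + 1) n, beta l p) * lam j * etaP eta i (j - 1))
    + lam n * etaP eta i (n - 1)

/-- The operator `W̃_{i,n} = Σ_{j=i}^{n−1} λ_j η_{i,j−1} (Wₙ ∘ ⋯ ∘ W_{j+1}) + λ_n η_{i,n−1} Id`. -/
def Wt (W : ℕ → H →L[ℝ] H) (lam eta : ℕ → ℝ) (i n : ℕ) : H →L[ℝ] H :=
  (∑ j ∈ Finset.Icc i (n - 1), (lam j * etaP eta i (j - 1)) • opComp W (j + 1) n)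
    + (lam n * etaP eta i (n - 1)) • (1 : H →L[ℝ] H)

/-- `a_{i,n}`. -/
def aC (beta : ℕ → ℕ → ℝ) (lam eta : ℕ → ℝ) (i n : ℕ) : ℝ :=
  (1 / 2) * ⨆ p : ℕ,
    (betaC beta i n p ^ 2 + betaT beta lam eta i n p ^ 2 + etaP eta i n ^ 2
      + Real.sqrt ((betaC beta i n p ^ 2 + betaT beta lam eta i n p ^ 2 + etaP eta i n ^ 2) ^ 2
          - 4 * betaC beta i n p ^ 2 * etaP eta i n ^ 2))

/-- `ā_{i,n} = sup_p (β_{i,n,p}² + β̃_{i,n,p}²)`. -/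
def aBar (beta : ℕ → ℕ → ℝ) (lam eta : ℕ → ℝ) (i n : ℕ) : ℝ :=
  ⨆ p : ℕ, (betaC beta i n p ^ 2 + betaT beta lam eta i n p ^ 2)

/-- `Qₙ(x, b) = (Rₙ x, b)`. -/
def Qop (R : ℕ → H → H) (n : ℕ) (z : WithLp 2 (H × H)) : WithLp 2 (H × H) :=
  mkP (R n (fstP z)) (sndP z)

/-- The virtual network `Qₙ ∘ Uₙ ∘ ⋯ ∘ Q₁ ∘ U₁`. -/
def net (U : ℕ → WithLp 2 (H × H) →L[ℝ] WithLp 2 (H × H))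
    (Q : ℕ → WithLp 2 (H × H) → WithLp 2 (H × H)) :
    ℕ → (WithLp 2 (H × H) → WithLp 2 (H × H))
  | 0 => id
  | n + 1 => fun z => Q (n + 1) (U (n + 1) (net U Q n z))

/-- `Ū_m (x, b) = W_m x + λ_m b` as a continuous linear map to `H`. -/
def Ubar (W : ℕ → H →L[ℝ] H) (lam : ℕ → ℝ) (m : ℕ) : WithLp 2 (H × H) →L[ℝ] H :=
  ((W m).comp fstL) + lam m • sndL

/-- `Û₁ b = (λ₁ b, η₁ b)`. -/
def Uhat1a (lam eta : ℕ → ℝ) : H →L[ℝ] WithLp 2 (H × H) :=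
  ((WithLp.prodContinuousLinearEquiv 2 ℝ H H).symm.toContinuousLinearMap).comp
    ((lam 1 • (1 : H →L[ℝ] H)).prod (eta 1 • (1 : H →L[ℝ] H)))

/-- `Û₁ b = (W₁ b + λ₁ b, η₁ b)`. -/
def Uhat1b (W : ℕ → H →L[ℝ] H) (lam eta : ℕ → ℝ) : H →L[ℝ] WithLp 2 (H × H) :=
  ((WithLp.prodContinuousLinearEquiv 2 ℝ H H).symm.toContinuousLinearMap).comp
    ((W 1 + lam 1 • (1 : H →L[ℝ] H)).prod (eta 1 • (1 : H →L[ℝ] H)))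

/-- The chain `Qₙ ∘ Uₙ ∘ ⋯ ∘ Q₂ ∘ U₂ ∘ Q₁ ∘ Û₁` (for `n ≥ 1`), fed with an input in `H`. -/
def midNet (U : ℕ → WithLp 2 (H × H) →L[ℝ] WithLp 2 (H × H))
    (Q : ℕ → WithLp 2 (H × H) → WithLp 2 (H × H)) (U1 : H → WithLp 2 (H × H)) :
    ℕ → (H → WithLp 2 (H × H))
  | 0 => U1
  | 1 => fun b => Q 1 (U1 b)
  | n + 2 => fun b => Q (n + 2) (U (n + 2) (midNet U Q U1 (n + 1) b))

/-! ### Coordinates of the linear layers -/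

lemma le_of_sq_le_sq_of_nonneg {x y : ℝ} (h : x ^ 2 ≤ y ^ 2) (hy : 0 ≤ y) : x ≤ y :=
  le_of_abs_le ((sq_le_sq.1 h).trans_eq (abs_of_nonneg hy))

lemma le_sqrt_mul {x y a : ℝ} (hx : 0 ≤ x) (hy : 0 ≤ y) (h : x ^ 2 ≤ a * y ^ 2) :
    x ≤ Real.sqrt a * y := by
  rw [← Real.sqrt_sq hx]
  calc Real.sqrt (x ^ 2) ≤ Real.sqrt (a * y ^ 2) := Real.sqrt_le_sqrt h
    _ = _ := by rw [Real.sqrt_mul' _ (sq_nonneg y), Real.sqrt_sq hy]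

lemma fstP_mkP (x b : H) : fstP (mkP x b) = x := rfl

lemma sndP_mkP (x b : H) : sndP (mkP x b) = b := rfl

lemma fstP_Uop (W : ℕ → H →L[ℝ] H) (lam eta : ℕ → ℝ) (n : ℕ) (z : WithLp 2 (H × H)) :
    fstP (Uop W lam eta n z) = W n (fstP z) + lam n • sndP z := rfl

lemma sndP_Uop (W : ℕ → H →L[ℝ] H) (lam eta : ℕ → ℝ) (n : ℕ) (z : WithLp 2 (H × H)) :
    sndP (Uop W lam eta n z) = eta n • sndP z := rfl

lemma normP_sq (z : WithLp 2 (H × H)) : ‖z‖ ^ 2 = ‖fstP z‖ ^ 2 + ‖sndP z‖ ^ 2 :=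
  WithLp.prod_norm_sq_eq_of_L2 z

lemma opComp_succ {E : Type*} [NormedAddCommGroup E] [NormedSpace ℝ E]
    (A : ℕ → E →L[ℝ] E) {i n : ℕ} (h : i ≤ n + 1) (z : E) :
    opComp A i (n + 1) z = A (n + 1) (opComp A i n z) := by
  rw [opComp, if_neg (by omega)]; rfl

lemma opComp_of_lt {E : Type*} [NormedAddCommGroup E] [NormedSpace ℝ E]
    (A : ℕ → E →L[ℝ] E) {i n : ℕ} (h : n < i) (z : E) : opComp A i n z = z := by
  cases n with
  | zero => rfl
  | succ n => rw [opComp, if_pos h]; rfl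

lemma etaP_succ (eta : ℕ → ℝ) {i n : ℕ} (h : i ≤ n + 1) :
    etaP eta i (n + 1) = etaP eta i n * eta (n + 1) := by
  simp only [etaP]; exact Finset.prod_Icc_succ_top h _

lemma betaC_succ (beta : ℕ → ℕ → ℝ) {i n : ℕ} (h : i ≤ n + 1) (p : ℕ) :
    betaC beta i (n + 1) p = betaC beta i n p * beta (n + 1) p := by
  simp only [betaC]; exact Finset.prod_Icc_succ_top h _

lemma betaT_self (beta : ℕ → ℕ → ℝ) (lam eta : ℕ → ℝ) (i p : ℕ) :
    betaT beta lam eta (i + 1) (i + 1) p = lam (i + 1) := by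
  simp [betaT, etaP]

lemma betaT_succ (beta : ℕ → ℕ → ℝ) (lam eta : ℕ → ℝ) {i n : ℕ} (h1 : 1 ≤ i) (h : i ≤ n) (p : ℕ) :
    betaT beta lam eta i (n + 1) p
      = beta (n + 1) p * betaT beta lam eta i n p + lam (n + 1) * etaP eta i n := by
  obtain ⟨k, rfl⟩ : ∃ k, n = k + 1 := ⟨n - 1, by omega⟩
  simp only [betaT, Nat.add_sub_cancel]
  rw [Finset.sum_Icc_succ_top h, mul_add, Finset.mul_sum]
  congr 1
  congr 1
  · refine Finset.sum_congr rfl fun j hj => ?_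
    rw [Finset.prod_Icc_succ_top (by have := (Finset.mem_Icc.1 hj).2; omega)]
    ring
  · simp; ring

lemma inner_diag (v : HilbertBasis ℕ ℝ H) (A : H →L[ℝ] H) (c : ℕ → ℝ)
    (hA : ∀ p, A (v p) = c p • v p) (x : H) (p : ℕ) :
    inner ℝ (v p) (A x) = c p * inner ℝ (v p) x := by
  have h1 := ((v.hasSum_repr x).mapL A).mapL (innerSL ℝ (v p))
  have h2 := hasSum_single (f := fun q => (innerSL ℝ (v p)) (A (v.repr x q • v q))) p (by
    intro q hq
    have := v.orthonormal.2 hq.symm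
    simp [hA, this])
  have h3 := h1.unique h2
  have hp : ‖v p‖ = 1 := v.orthonormal.1 p
  simpa [hA, inner_smul_right, v.repr_apply_apply, hp, mul_comm] using h3

lemma abs_le_of_diag (v : HilbertBasis ℕ ℝ H) (A : H →L[ℝ] H) (c : ℕ → ℝ)
    (hA : ∀ p, A (v p) = c p • v p) (p : ℕ) : |c p| ≤ ‖A‖ := by
  have h := A.le_opNorm (v p)
  rwa [hA, norm_smul, v.orthonormal.1 p, mul_one, mul_one, Real.norm_eq_abs] at h

lemma hasSum_sq (v : HilbertBasis ℕ ℝ H) (x : H) :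
    HasSum (fun p => inner ℝ (v p) x ^ 2) (‖x‖ ^ 2) := by
  have h := v.hasSum_inner_mul_inner x x
  rw [real_inner_self_eq_norm_sq] at h
  refine h.congr_fun fun p => ?_
  rw [real_inner_comm, sq]

/-- A quadratic inequality holding in every coordinate holds for the norms, by Parseval. -/
lemma norm_sq_le_of_coord (v : HilbertBasis ℕ ℝ H) {x b y d : H} {a : ℝ}
    (h : ∀ p, inner ℝ (v p) y ^ 2 + inner ℝ (v p) d ^ 2
      ≤ a * (inner ℝ (v p) x ^ 2 + inner ℝ (v p) b ^ 2)) :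
    ‖y‖ ^ 2 + ‖d‖ ^ 2 ≤ a * (‖x‖ ^ 2 + ‖b‖ ^ 2) :=
  hasSum_le h ((hasSum_sq v y).add (hasSum_sq v d))
    (((hasSum_sq v x).add (hasSum_sq v b)).mul_left a)

section Layers

variable {m : ℕ} {v : HilbertBasis ℕ ℝ H} {W : ℕ → H →L[ℝ] H}
  {beta : ℕ → ℕ → ℝ} {lam eta : ℕ → ℝ}

lemma snd_opComp (i n : ℕ) (hi : 1 ≤ i) (hin : i ≤ n) (z : WithLp 2 (H × H)) :
    sndP (opComp (Uop W lam eta) i n z) = etaP eta i n • sndP z := by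
  induction n, hin using Nat.le_induction with
  | base =>
    obtain ⟨k, rfl⟩ : ∃ k, i = k + 1 := ⟨i - 1, by omega⟩
    rw [opComp_succ _ le_rfl, opComp_of_lt _ (Nat.lt_succ_self k), sndP_Uop]
    simp [etaP]
  | succ n hin ih =>
    rw [opComp_succ _ (by omega), sndP_Uop, ih, etaP_succ _ (by omega), smul_smul, mul_comm]

lemma inner_fst_opComp (hW : ∀ n, 1 ≤ n → n ≤ m → ∀ p : ℕ, W n (v p) = beta n p • v p)
    (i n : ℕ) (hi : 1 ≤ i) (hin : i ≤ n) (hn : n ≤ m) (z : WithLp 2 (H × H)) (p : ℕ) :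
    inner ℝ (v p) (fstP (opComp (Uop W lam eta) i n z))
      = betaC beta i n p * inner ℝ (v p) (fstP z)
        + betaT beta lam eta i n p * inner ℝ (v p) (sndP z) := by
  induction n, hin using Nat.le_induction with
  | base =>
    obtain ⟨k, rfl⟩ : ∃ k, i = k + 1 := ⟨i - 1, by omega⟩
    rw [opComp_succ _ le_rfl, opComp_of_lt _ (Nat.lt_succ_self k), fstP_Uop, inner_add_right,
      inner_diag v _ _ (hW _ hi hn), inner_smul_right, betaT_self]
    simp [betaC]
  | succ n hin ih =>
    rw [opComp_succ _ (by omega), fstP_Uop, inner_add_right,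
      inner_diag v _ _ (hW _ (by omega) hn), inner_smul_right, ih (by omega),
      snd_opComp i n hi hin, inner_smul_right, betaC_succ _ (by omega), betaT_succ _ _ _ hi hin]
    ring

lemma betaC_bdd (hW : ∀ n, 1 ≤ n → n ≤ m → ∀ p : ℕ, W n (v p) = beta n p • v p)
    (i n : ℕ) (hi : 1 ≤ i) (hn : n ≤ m) :
    ∃ C, ∀ p, betaC beta i n p ^ 2 ≤ C := by
  refine ⟨(∏ j ∈ Finset.Icc i n, ‖W j‖) ^ 2, fun p => ?_⟩
  rw [sq_le_sq, abs_of_nonneg (Finset.prod_nonneg fun j _ => norm_nonneg (W j)), betaC,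
    Finset.abs_prod]
  refine Finset.prod_le_prod (fun _ _ => abs_nonneg _) fun j hj => ?_
  have hj := Finset.mem_Icc.1 hj
  exact abs_le_of_diag v (W j) (beta j) (hW j (by omega) (by omega)) p

lemma betaT_bdd (hW : ∀ n, 1 ≤ n → n ≤ m → ∀ p : ℕ, W n (v p) = beta n p • v p)
    (i n : ℕ) (hi : 1 ≤ i) (hin : i ≤ n) (hn : n ≤ m) :
    ∃ C, ∀ p, |betaT beta lam eta i n p| ≤ C := by
  induction n, hin using Nat.le_induction with
  | base =>
    obtain ⟨k, rfl⟩ : ∃ k, i = k + 1 := ⟨i - 1, by omega⟩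
    exact ⟨|lam (k + 1)|, fun p => by rw [betaT_self]⟩
  | succ n hin ih =>
    obtain ⟨C, hC⟩ := ih (by omega)
    refine ⟨‖W (n + 1)‖ * C + |lam (n + 1) * etaP eta i n|, fun p => ?_⟩
    rw [betaT_succ _ _ _ hi hin]
    refine (abs_add_le _ _).trans ?_
    rw [abs_mul (beta _ _)]
    gcongr
    · exact abs_le_of_diag v (W (n + 1)) (beta (n + 1)) (hW (n + 1) (by omega) hn) p
    · exact hC p

/-! ### Operator norm bounds -/

/-- The squared norm of the matrix with rows `(β, t)` and `(0, η)` is at most the larger root of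
the characteristic polynomial of its Gram matrix. -/
lemma two_by_two (β t η x b : ℝ) :
    (β * x + t * b) ^ 2 + (η * b) ^ 2
      ≤ (1 / 2 * (β ^ 2 + t ^ 2 + η ^ 2
        + Real.sqrt ((β ^ 2 + t ^ 2 + η ^ 2) ^ 2 - 4 * β ^ 2 * η ^ 2))) * (x ^ 2 + b ^ 2) := by
  have hdisc : (β ^ 2 + t ^ 2 + η ^ 2) ^ 2 - 4 * β ^ 2 * η ^ 2
      = (β ^ 2 - t ^ 2 - η ^ 2) ^ 2 + (2 * β * t) ^ 2 := by ring
  rw [hdisc]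
  set D := β ^ 2 - t ^ 2 - η ^ 2 with hD
  set s := Real.sqrt (D ^ 2 + (2 * β * t) ^ 2) with hs
  have hs2 : s ^ 2 = D ^ 2 + (2 * β * t) ^ 2 := Real.sq_sqrt (by positivity)
  have hs0 : 0 ≤ s := Real.sqrt_nonneg _
  -- Cauchy-Schwarz for `(D, 2βt)` against `(x² - b², 2xb)`, whose norm is `x² + b²`.
  have key : D * (x ^ 2 - b ^ 2) + 2 * β * t * (2 * x * b) ≤ s * (x ^ 2 + b ^ 2) := by
    refine le_of_sq_le_sq_of_nonneg ?_ (by positivity)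
    have : (s * (x ^ 2 + b ^ 2)) ^ 2 - (D * (x ^ 2 - b ^ 2) + 2 * β * t * (2 * x * b)) ^ 2
        = (D * (2 * x * b) - 2 * β * t * (x ^ 2 - b ^ 2)) ^ 2 := by
      rw [mul_pow, hs2]; ring
    nlinarith [sq_nonneg (D * (2 * x * b) - 2 * β * t * (x ^ 2 - b ^ 2))]
  rw [hD] at key
  nlinarith [key]

lemma norm_opComp_le (hW : ∀ n, 1 ≤ n → n ≤ m → ∀ p : ℕ, W n (v p) = beta n p • v p)
    (i n : ℕ) (hi : 1 ≤ i) (hin : i ≤ n) (hn : n ≤ m) (z : WithLp 2 (H × H)) :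
    ‖opComp (Uop W lam eta) i n z‖ ≤ Real.sqrt (aC beta lam eta i n) * ‖z‖ := by
  obtain ⟨C, hC⟩ := betaC_bdd hW i n hi hn
  obtain ⟨D, hD⟩ := betaT_bdd (lam := lam) (eta := eta) hW i n hi hin hn
  refine le_sqrt_mul (norm_nonneg _) (norm_nonneg _) ?_
  rw [normP_sq, normP_sq z]
  refine norm_sq_le_of_coord v fun p => ?_
  rw [inner_fst_opComp hW i n hi hin hn, snd_opComp i n hi hin, inner_smul_right]
  refine (two_by_two _ _ _ _ _).trans ?_
  refine mul_le_mul_of_nonneg_right ?_ (by positivity)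
  rw [aC]
  refine mul_le_mul_of_nonneg_left ?_ (by norm_num)
  refine le_ciSup (f := fun p : ℕ =>
    (betaC beta i n p ^ 2 + betaT beta lam eta i n p ^ 2 + etaP eta i n ^ 2
      + Real.sqrt ((betaC beta i n p ^ 2 + betaT beta lam eta i n p ^ 2 + etaP eta i n ^ 2) ^ 2
          - 4 * betaC beta i n p ^ 2 * etaP eta i n ^ 2))) ?_ p
  refine ⟨2 * (C + D ^ 2 + etaP eta i n ^ 2), ?_⟩
  rintro _ ⟨q, rfl⟩
  have h1 : betaT beta lam eta i n q ^ 2 ≤ D ^ 2 := by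
    rw [← sq_abs]; exact pow_le_pow_left₀ (abs_nonneg _) (hD q) 2
  have h2 : Real.sqrt
      ((betaC beta i n q ^ 2 + betaT beta lam eta i n q ^ 2 + etaP eta i n ^ 2) ^ 2
          - 4 * betaC beta i n q ^ 2 * etaP eta i n ^ 2)
      ≤ betaC beta i n q ^ 2 + betaT beta lam eta i n q ^ 2 + etaP eta i n ^ 2 := by
    refine Real.sqrt_le_iff.2 ⟨by positivity, ?_⟩
    have : 0 ≤ 4 * betaC beta i n q ^ 2 * etaP eta i n ^ 2 := by positivity
    linarith
  have := hC q
  simp only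
  linarith

lemma norm_fst_opComp_le (hW : ∀ n, 1 ≤ n → n ≤ m → ∀ p : ℕ, W n (v p) = beta n p • v p)
    (i n : ℕ) (hi : 1 ≤ i) (hin : i ≤ n) (hn : n ≤ m) (z : WithLp 2 (H × H)) :
    ‖fstP (opComp (Uop W lam eta) i n z)‖ ≤ Real.sqrt (aBar beta lam eta i n) * ‖z‖ := by
  obtain ⟨C, hC⟩ := betaC_bdd hW i n hi hn
  obtain ⟨D, hD⟩ := betaT_bdd (lam := lam) (eta := eta) hW i n hi hin hn
  refine le_sqrt_mul (norm_nonneg _) (norm_nonneg _) ?_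
  rw [normP_sq z]
  have h := norm_sq_le_of_coord v (x := fstP z) (b := sndP z)
    (y := fstP (opComp (Uop W lam eta) i n z)) (d := 0) (a := aBar beta lam eta i n) fun p => ?_
  · simpa using h
  rw [inner_fst_opComp hW i n hi hin hn, inner_zero_right]
  have hsup : betaC beta i n p ^ 2 + betaT beta lam eta i n p ^ 2 ≤ aBar beta lam eta i n := by
    refine le_ciSup (f := fun p : ℕ => betaC beta i n p ^ 2 + betaT beta lam eta i n p ^ 2) ?_ p
    refine ⟨C + D ^ 2, ?_⟩
    rintro _ ⟨q, rfl⟩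
    exact add_le_add (hC q) (by rw [← sq_abs]; exact pow_le_pow_left₀ (abs_nonneg _) (hD q) 2)
  refine le_trans ?_ (mul_le_mul_of_nonneg_right hsup (by positivity))
  nlinarith [sq_nonneg (betaC beta i n p * inner ℝ (v p) (sndP z)
    - betaT beta lam eta i n p * inner ℝ (v p) (fstP z))]

lemma norm_opComp_mkP_le (hW : ∀ n, 1 ≤ n → n ≤ m → ∀ p : ℕ, W n (v p) = beta n p • v p)
    (n : ℕ) (hn1 : 1 ≤ n) (hn : n ≤ m) (b : H) :
    ‖opComp (Uop W lam eta) 1 n (mkP 0 b)‖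
      ≤ Real.sqrt (⨆ p : ℕ, (betaT beta lam eta 1 n p ^ 2 + etaP eta 1 n ^ 2)) * ‖b‖ := by
  obtain ⟨D, hD⟩ := betaT_bdd (lam := lam) (eta := eta) hW 1 n le_rfl hn1 hn
  refine le_sqrt_mul (norm_nonneg _) (norm_nonneg _) ?_
  rw [normP_sq]
  have h := norm_sq_le_of_coord v (x := 0) (b := b)
    (y := fstP (opComp (Uop W lam eta) 1 n (mkP 0 b)))
    (d := sndP (opComp (Uop W lam eta) 1 n (mkP 0 b)))
    (a := ⨆ p : ℕ, (betaT beta lam eta 1 n p ^ 2 + etaP eta 1 n ^ 2)) fun p => ?_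
  · simpa using h
  rw [inner_fst_opComp hW 1 n le_rfl hn1 hn, snd_opComp 1 n le_rfl hn1, fstP_mkP, sndP_mkP,
    inner_smul_right, inner_zero_right]
  have hsup := le_ciSup (f := fun p : ℕ => betaT beta lam eta 1 n p ^ 2 + etaP eta 1 n ^ 2) (by
    refine ⟨D ^ 2 + etaP eta 1 n ^ 2, ?_⟩
    rintro _ ⟨q, rfl⟩
    simp only
    gcongr 1
    rw [← sq_abs]; exact pow_le_pow_left₀ (abs_nonneg _) (hD q) 2) p
  refine le_trans (le_of_eq ?_) (mul_le_mul_of_nonneg_right hsup (by positivity))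
  ring

/-- The linear part of the whole network, shifted by a multiple of the identity. -/
lemma norm_fst_opComp_mkP_sub_le
    (hW : ∀ n, 1 ≤ n → n ≤ m → ∀ p : ℕ, W n (v p) = beta n p • v p)
    (n : ℕ) (hn1 : 1 ≤ n) (hn : n ≤ m) (c : ℝ) (b : H) :
    ‖fstP (opComp (Uop W lam eta) 1 n (mkP 0 b)) - c • b‖
      ≤ Real.sqrt (⨆ p : ℕ, (betaT beta lam eta 1 n p - c) ^ 2) * ‖b‖ := by
  obtain ⟨D, hD⟩ := betaT_bdd (lam := lam) (eta := eta) hW 1 n le_rfl hn1 hn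
  refine le_sqrt_mul (norm_nonneg _) (norm_nonneg _) ?_
  have h := norm_sq_le_of_coord v (x := 0) (b := b)
    (y := fstP (opComp (Uop W lam eta) 1 n (mkP 0 b)) - c • b) (d := 0)
    (a := ⨆ p : ℕ, (betaT beta lam eta 1 n p - c) ^ 2) fun p => ?_
  · simpa using h
  rw [inner_sub_right, inner_fst_opComp hW 1 n le_rfl hn1 hn, fstP_mkP, sndP_mkP,
    inner_smul_right, inner_zero_right]
  have hsup := le_ciSup (f := fun p : ℕ => (betaT beta lam eta 1 n p - c) ^ 2) (by
    refine ⟨(D + |c|) ^ 2, ?_⟩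
    rintro _ ⟨q, rfl⟩
    simp only
    rw [← sq_abs]
    exact pow_le_pow_left₀ (abs_nonneg _) ((abs_sub _ _).trans (by gcongr; exact hD q)) 2) p
  refine le_trans (le_of_eq ?_) (mul_le_mul_of_nonneg_right hsup (by positivity))
  ring

end Layers

/-! ### The nonlinear network -/

/-- The reflection `2 R - Id` of a firmly nonexpansive map is nonexpansive; here `u` and `w` are the
differences of two images and of the corresponding two points. -/
lemma reflect_le {E : Type*} [NormedAddCommGroup E] [InnerProductSpace ℝ E] {u w : E}
    (h : ‖u‖ ^ 2 + ‖w - u‖ ^ 2 ≤ ‖w‖ ^ 2) : ‖(2 : ℝ) • u - w‖ ≤ ‖w‖ := by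
  have hp := parallelogram_law_with_norm ℝ u (w - u)
  have e1 : u + (w - u) = w := by abel
  have e2 : u - (w - u) = (2 : ℝ) • u - w := by rw [two_smul]; abel
  rw [e1, e2] at hp
  refine le_of_sq_le_sq_of_nonneg ?_ (norm_nonneg _)
  nlinarith

lemma Qop_firm {R : ℕ → H → H} {n : ℕ} (hR : ∀ x y : H,
      ‖R n x - R n y‖ ^ 2 + ‖(x - R n x) - (y - R n y)‖ ^ 2 ≤ ‖x - y‖ ^ 2)
    (z w : WithLp 2 (H × H)) :
    ‖(2 : ℝ) • (Qop R n z - Qop R n w) - (z - w)‖ ≤ ‖z - w‖ := by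
  refine reflect_le ?_
  have e1 : fstP (Qop R n z - Qop R n w) = R n (fstP z) - R n (fstP w) := rfl
  have e2 : sndP (Qop R n z - Qop R n w) = sndP z - sndP w := rfl
  have e3 : fstP (z - w) = fstP z - fstP w := rfl
  have e4 : sndP (z - w) = sndP z - sndP w := rfl
  have e5 : fstP (z - w - (Qop R n z - Qop R n w))
    = (fstP z - R n (fstP z)) - (fstP w - R n (fstP w)) := by
      rw [sub_sub_sub_comm]; rfl
  have e6 : sndP (z - w - (Qop R n z - Qop R n w)) = 0 := by
      rw [← sub_self (sndP z - sndP w)]; rfl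
  rw [normP_sq, normP_sq (z - w), normP_sq (z - w - _), e1, e2, e3, e4, e5, e6]
  have := hR (fstP z) (fstP w)
  simp only [norm_zero]
  linarith

/-- If `g` records the (differences of) layer outputs, `2 g (i+1) - U (i+1) (g i)` is the reflected
part of layer `i+1`; the last pre-activation is a sum of linear images of the reflected parts. -/
lemma unroll {E : Type*} [NormedAddCommGroup E] [NormedSpace ℝ E]
    (U : ℕ → E →L[ℝ] E) (g : ℕ → E) (n : ℕ) :
    (2 : ℝ) ^ n • U (n + 1) (g n) = opComp U 1 (n + 1) (g 0)
      + ∑ i ∈ Finset.range n,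
          (2 : ℝ) ^ i • opComp U (i + 2) (n + 1) ((2 : ℝ) • g (i + 1) - U (i + 1) (g i)) := by
  induction n with
  | zero => simp [opComp]
  | succ n ih =>
    have hsum : ∀ i ∈ Finset.range (n + 1),
        (2 : ℝ) ^ i • opComp U (i + 2) (n + 1 + 1) ((2 : ℝ) • g (i + 1) - U (i + 1) (g i))
        = U (n + 2) ((2 : ℝ) ^ i •
            opComp U (i + 2) (n + 1) ((2 : ℝ) • g (i + 1) - U (i + 1) (g i))) := by
      intro i hi
      have := Finset.mem_range.1 hi
      rw [opComp_succ _ (by omega), map_smul]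
    rw [Finset.sum_congr rfl hsum, ← map_sum, opComp_succ _ (by omega), ← map_add,
      Finset.sum_range_succ, ← add_assoc, ← ih, opComp_of_lt _ (by omega), ← map_smul]
    congr 1
    rw [smul_sub, smul_smul, ← pow_succ]
    abel

lemma sum_Icc_two (f : ℕ → ℝ) (n : ℕ) :
    ∑ i ∈ Finset.Icc 2 (n + 1), f i = ∑ i ∈ Finset.range n, f (i + 2) := by
  induction n with
  | zero => simp
  | succ n ih => rw [Finset.sum_Icc_succ_top (by omega), ih, Finset.sum_range_succ]

lemma midNet_eq_net (W : ℕ → H →L[ℝ] H) (lam eta : ℕ → ℝ) (R : ℕ → H → H) (n : ℕ) (b : H) :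
    midNet (Uop W lam eta) (Qop R) (⇑(Uhat1a lam eta)) (n + 1) b
      = net (Uop W lam eta) (Qop R) (n + 1) (mkP 0 b) := by
  induction n with
  | zero =>
    have : Uhat1a lam eta b = Uop W lam eta 1 (mkP 0 b) := by
      have e : Uop W lam eta 1 (mkP 0 b) = mkP (W 1 0 + lam 1 • b) (eta 1 • b) := rfl
      rw [e, map_zero, zero_add]; rfl
    simp only [midNet, net, this, id, zero_add]
  | succ n ih => exact congrArg (fun z => Qop R (n + 2) (Uop W lam eta (n + 2) z)) ih

theorem statement17 (m : ℕ) (hm : 1 ≤ m) [CompleteSpace H]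
    (v : HilbertBasis ℕ ℝ H)
    (W : ℕ → H →L[ℝ] H) (beta : ℕ → ℕ → ℝ) (lam eta : ℕ → ℝ)
    (hW : ∀ n, 1 ≤ n → n ≤ m → ∀ p : ℕ, W n (v p) = beta n p • v p)
    (hlam : ∀ n, 1 ≤ n → n ≤ m → 0 < lam n)
    (heta : ∀ n, 1 ≤ n → n ≤ m → 0 < eta n)
    (hm2 : 2 ≤ m)
    (R : ℕ → H → H)
    (hR : ∀ n, 1 ≤ n → n ≤ m → ∀ x y : H,
      ‖R n x - R n y‖ ^ 2 + ‖(x - R n x) - (y - R n y)‖ ^ 2 ≤ ‖x - y‖ ^ 2)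
    (θh : ℕ → ℝ)
    (hθh : ∀ n, 1 ≤ n → n ≤ m - 1 →
      θh n = Real.sqrt (⨆ p : ℕ, (betaT beta lam eta 1 n p ^ 2 + etaP eta 1 n ^ 2))
        + ∑ i ∈ Finset.Icc 2 n, θh (i - 1) * Real.sqrt (aC beta lam eta i n))
    (hθhm : θh m = Real.sqrt (⨆ p : ℕ, betaT beta lam eta 1 m p ^ 2)
        + ∑ i ∈ Finset.Icc 2 m, θh (i - 1) * Real.sqrt (aBar beta lam eta i m))
    (α : ℝ) (hα : 1 / 2 ≤ α) (hα1 : α ≤ 1)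
    (bhatα : ℝ)
    (hbhatα : bhatα = ⨆ p : ℕ, (betaT beta lam eta 1 m p - 2 ^ m * (1 - α)) ^ 2)
    (hcond : Real.sqrt bhatα - Real.sqrt (⨆ p : ℕ, betaT beta lam eta 1 m p ^ 2)
        ≤ 2 ^ m * α - 2 * θh m) :
    ∃ Rm : H → H,
      (∀ x y : H, ‖Rm x - Rm y‖ ≤ ‖x - y‖) ∧
      ∀ b : H,
        R m (Ubar W lam m (midNet (Uop W lam eta) (Qop R) (⇑(Uhat1a lam eta)) (m - 1) b))
          = (1 - α) • b + α • Rm b := by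
  have hα0 : 0 < α := by linarith
  set U := Uop W lam eta with hU
  have hmid : ∀ b, midNet U (Qop R) (⇑(Uhat1a lam eta)) (m - 1) b
      = net U (Qop R) (m - 1) (mkP 0 b) := by
    intro b
    obtain ⟨k, rfl⟩ : ∃ k, m = k + 2 := ⟨m - 2, by omega⟩
    exact midNet_eq_net W lam eta R k b
  refine ⟨fun b => α⁻¹ • (R m (Ubar W lam m (midNet U (Qop R) (⇑(Uhat1a lam eta)) (m - 1) b))
    - (1 - α) • b), ?_, ?_⟩
  swap
  · intro b
    simp only [smul_smul, mul_inv_cancel₀ hα0.ne', one_smul]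
    abel
  intro x y
  simp only [hmid]
  set N : ℕ → H → WithLp 2 (H × H) := fun n b => net U (Qop R) n (mkP 0 b) with hN
  set g : ℕ → WithLp 2 (H × H) := fun n => N n x - N n y with hg
  have hg0 : g 0 = mkP 0 (x - y) := by
    have : g 0 = mkP (0 - 0) (x - y) := rfl
    rw [this, sub_zero]
  have hrefl : ∀ i, i + 1 ≤ m →
      ‖(2 : ℝ) • g (i + 1) - U (i + 1) (g i)‖ ≤ ‖U (i + 1) (g i)‖ := by
    intro i hi
    simp only [hg, map_sub]
    exact Qop_firm (hR (i + 1) (by omega) hi) _ _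
  -- The pre-activation of layer `n + 1` is Lipschitz with constant `θ̂ (n + 1) / 2 ^ n`.
  have hlip : ∀ n, n + 1 ≤ m - 1 → (2 : ℝ) ^ n * ‖U (n + 1) (g n)‖ ≤ θh (n + 1) * ‖x - y‖ := by
    intro n
    induction n using Nat.strong_induction_on with
    | _ n ih =>
      intro hn
      have hnorm : (2 : ℝ) ^ n * ‖U (n + 1) (g n)‖ = ‖(2 : ℝ) ^ n • U (n + 1) (g n)‖ := by
        rw [norm_smul, Real.norm_of_nonneg (by positivity)]
      rw [hnorm, unroll, hθh (n + 1) (by omega) hn, sum_Icc_two, add_mul, Finset.sum_mul]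
      refine (norm_add_le _ _).trans (add_le_add ?_ ((norm_sum_le _ _).trans ?_))
      · rw [hg0]
        exact norm_opComp_mkP_le hW (n + 1) (by omega) (by omega) _
      · refine Finset.sum_le_sum fun i hi => ?_
        have hi := Finset.mem_range.1 hi
        have h1 := norm_opComp_le (lam := lam) (eta := eta) hW (i + 2) (n + 1) (by omega)
          (by omega) (by omega) ((2 : ℝ) • g (i + 1) - U (i + 1) (g i))
        have h2 := hrefl i (by omega)
        have h3 := ih i hi (by omega)
        rw [norm_smul, Real.norm_of_nonneg (by positivity)]
        have e : i + 2 - 1 = i + 1 := rfl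
        rw [e]
        calc (2 : ℝ) ^ i * ‖opComp U (i + 2) (n + 1) ((2 : ℝ) • g (i + 1) - U (i + 1) (g i))‖
            ≤ (2 : ℝ) ^ i * (Real.sqrt (aC beta lam eta (i + 2) (n + 1))
                * ‖U (i + 1) (g i)‖) := by
              gcongr
              exact h1.trans (by gcongr)
          _ = Real.sqrt (aC beta lam eta (i + 2) (n + 1))
                * ((2 : ℝ) ^ i * ‖U (i + 1) (g i)‖) := by ring
          _ ≤ Real.sqrt (aC beta lam eta (i + 2) (n + 1)) * (θh (i + 1) * ‖x - y‖) := by gcongr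
          _ = _ := by ring
  obtain ⟨k, rfl⟩ : ∃ k, m = k + 1 := ⟨m - 1, by omega⟩
  simp only [Nat.add_sub_cancel] at hlip ⊢
  rw [sum_Icc_two] at hθhm
  -- `F` is the difference of the last pre-activations, `L` its linear part, `S` the remainder.
  set F : H := fstP (U (k + 1) (g k)) with hF
  set L : H := fstP (opComp U 1 (k + 1) (mkP 0 (x - y))) with hL
  set S : H := ∑ i ∈ Finset.range k, (2 : ℝ) ^ i •
    fstP (opComp U (i + 2) (k + 1) ((2 : ℝ) • g (i + 1) - U (i + 1) (g i))) with hS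
  set T : ℝ := ∑ i ∈ Finset.range k,
    θh (i + 2 - 1) * Real.sqrt (aBar beta lam eta (i + 2) (k + 1)) with hT
  have hFLS : (2 : ℝ) ^ k • F = L + S := by
    have h := congrArg (fstL (H := H)) (unroll U g k)
    rw [map_smul, map_add, map_sum, hg0] at h
    simp only [map_smul] at h
    exact h
  have hSle : ‖S‖ ≤ T * ‖x - y‖ := by
    rw [hT, Finset.sum_mul]
    refine (norm_sum_le _ _).trans (Finset.sum_le_sum fun i hi => ?_)
    have hi := Finset.mem_range.1 hi
    have h1 := norm_fst_opComp_le (lam := lam) (eta := eta) hW (i + 2) (k + 1) (by omega)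
      (by omega) (by omega) ((2 : ℝ) • g (i + 1) - U (i + 1) (g i))
    have h2 := hrefl i (by omega)
    have h3 := hlip i (by omega)
    rw [norm_smul, Real.norm_of_nonneg (by positivity)]
    have e : i + 2 - 1 = i + 1 := rfl
    rw [e]
    calc (2 : ℝ) ^ i * ‖fstP (opComp U (i + 2) (k + 1) ((2 : ℝ) • g (i + 1) - U (i + 1) (g i)))‖
        ≤ (2 : ℝ) ^ i * (Real.sqrt (aBar beta lam eta (i + 2) (k + 1))
            * ‖U (i + 1) (g i)‖) := by
          gcongr
          exact h1.trans (by gcongr)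
      _ = Real.sqrt (aBar beta lam eta (i + 2) (k + 1))
            * ((2 : ℝ) ^ i * ‖U (i + 1) (g i)‖) := by ring
      _ ≤ Real.sqrt (aBar beta lam eta (i + 2) (k + 1)) * (θh (i + 1) * ‖x - y‖) := by gcongr
      _ = _ := by ring
  have hLle : ‖L‖ ≤ Real.sqrt (⨆ p : ℕ, betaT beta lam eta 1 (k + 1) p ^ 2) * ‖x - y‖ := by
    have h := norm_fst_opComp_mkP_sub_le (lam := lam) (eta := eta) hW (k + 1) (by omega) le_rfl 0
      (x - y)
    simpa using h
  have hLb : ‖L - ((2 : ℝ) ^ (k + 1) * (1 - α)) • (x - y)‖ ≤ Real.sqrt bhatα * ‖x - y‖ := by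
    rw [hbhatα]
    exact norm_fst_opComp_mkP_sub_le hW (k + 1) (by omega) le_rfl _ (x - y)
  have hFx : Ubar W lam (k + 1) (N k x) - Ubar W lam (k + 1) (N k y) = F := by
    rw [← map_sub]; rfl
  set G : H := R (k + 1) (Ubar W lam (k + 1) (N k x)) - R (k + 1) (Ubar W lam (k + 1) (N k y))
    with hG
  have hGF : ‖(2 : ℝ) • G - F‖ ≤ ‖F‖ := by
    refine reflect_le ?_
    have h := hR (k + 1) (by omega) le_rfl (Ubar W lam (k + 1) (N k x))
      (Ubar W lam (k + 1) (N k y))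
    rw [sub_sub_sub_comm, hFx] at h
    exact h
  have hFle : (2 : ℝ) ^ k * ‖F‖ ≤ θh (k + 1) * ‖x - y‖ := by
    have e : (2 : ℝ) ^ k * ‖F‖ = ‖L + S‖ := by
      rw [← hFLS, norm_smul, Real.norm_of_nonneg (by positivity)]
    rw [e, hθhm, add_mul]
    exact (norm_add_le _ _).trans (add_le_add hLle hSle)
  have hdecomp : (2 : ℝ) ^ (k + 1) • (G - (1 - α) • (x - y))
      = (L - ((2 : ℝ) ^ (k + 1) * (1 - α)) • (x - y)) + S + (2 : ℝ) ^ k • ((2 : ℝ) • G - F) := by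
    rw [smul_sub ((2 : ℝ) ^ k), hFLS, smul_smul, ← pow_succ, smul_sub, smul_smul]
    abel
  have hfin : (2 : ℝ) ^ (k + 1) * ‖G - (1 - α) • (x - y)‖
      ≤ (2 : ℝ) ^ (k + 1) * (α * ‖x - y‖) := by
    have e : (2 : ℝ) ^ (k + 1) * ‖G - (1 - α) • (x - y)‖
        = ‖(2 : ℝ) ^ (k + 1) • (G - (1 - α) • (x - y))‖ := by
      rw [norm_smul, Real.norm_of_nonneg (by positivity)]
    rw [e, hdecomp]
    have h1 : ‖(2 : ℝ) ^ k • ((2 : ℝ) • G - F)‖ ≤ θh (k + 1) * ‖x - y‖ := by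
      rw [norm_smul, Real.norm_of_nonneg (by positivity)]
      exact le_trans (by gcongr) hFle
    have h2 := mul_le_mul_of_nonneg_right hcond (norm_nonneg (x - y))
    have h3 : T = θh (k + 1) - Real.sqrt (⨆ p : ℕ, betaT beta lam eta 1 (k + 1) p ^ 2) := by
      rw [hθhm]; ring
    rw [h3] at hSle
    refine norm_add₃_le.trans ?_
    linarith
  have hfin' := le_of_mul_le_mul_left hfin (by positivity)
  rw [← smul_sub, sub_sub_sub_comm, ← smul_sub, norm_smul, norm_inv, Real.norm_of_nonneg hα0.le]
  rw [inv_mul_le_iff₀ hα0]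
  exact hfin'
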